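/- Suppose N is even. Then the matrix-valued function K(u) = Σ_{1≤i≤N/2} ( u E_{i, N/2−i+1} + E_{i+N/2, N−i+1} ) satisfies the cross-conjugated twisted reflection equation (CtRE) for all u, v for which all factors are defined. -/

import Mathlib

open Matrix
open scoped Kronecker

noncomputable section

/-- 1-based matrix unit `E_{a b}` in the `N × N` complex matrices. -/
def Em (N : ℕ) (a b : ℕ) : Matrix (Fin N) (Fin N) ℂ :=
  Matrix.of fun i j => if (i : ℕ) + 1 = a ∧ (j : ℕ) + 1 = b then 1 else 0

/-- The flip (permutation) operator `P = Σ_{i,j} E_{ij} ⊗ E_{ji}`. -/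
def Pmat (N : ℕ) : Matrix (Fin N × Fin N) (Fin N × Fin N) ℂ :=
  ∑ i ∈ Finset.Icc 1 N, ∑ j ∈ Finset.Icc 1 N, Em N i j ⊗ₖ Em N j i

/-- The constant R-matrix `R_q`. -/
def Rconst (N : ℕ) (q : ℂ) : Matrix (Fin N × Fin N) (Fin N × Fin N) ℂ :=
  (∑ i ∈ Finset.Icc 1 N, ∑ j ∈ Finset.Icc 1 N,
      (if i = j then q else 1) • (Em N i i ⊗ₖ Em N j j))
    + ∑ i ∈ Finset.Icc 1 N, ∑ j ∈ Finset.Icc 1 N,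
        (if i < j then q - q⁻¹ else 0) • (Em N i j ⊗ₖ Em N j i)

/-- `f_q(u) = 1/(q - q⁻¹ u)`. -/
def fBJ (q u : ℂ) : ℂ := (q - q⁻¹ * u)⁻¹

/-- The Bazhanov–Jimbo R-matrix `R(u) = f_q(u) R_q + f_{q⁻¹}(u⁻¹) P R_{q⁻¹} P`. -/
def RBJ (N : ℕ) (q u : ℂ) : Matrix (Fin N × Fin N) (Fin N × Fin N) ℂ :=
  fBJ q u • Rconst N q + fBJ q⁻¹ u⁻¹ • (Pmat N * Rconst N q⁻¹ * Pmat N)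

/-- `X1 = X ⊗ I`. -/
def M1 (N : ℕ) (X : Matrix (Fin N) (Fin N) ℂ) : Matrix (Fin N × Fin N) (Fin N × Fin N) ℂ :=
  X ⊗ₖ (1 : Matrix (Fin N) (Fin N) ℂ)

/-- `X2 = I ⊗ X`. -/
def M2 (N : ℕ) (X : Matrix (Fin N) (Fin N) ℂ) : Matrix (Fin N × Fin N) (Fin N × Fin N) ℂ :=
  (1 : Matrix (Fin N) (Fin N) ℂ) ⊗ₖ X

/-- `R21(u) = P R(u) P`. -/
def R21 (N : ℕ) (q u : ℂ) : Matrix (Fin N × Fin N) (Fin N × Fin N) ℂ :=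
  Pmat N * RBJ N q u * Pmat N

/-- Transposition in the first tensor factor. -/
def t1 (N : ℕ) (X : Matrix (Fin N × Fin N) (Fin N × Fin N) ℂ) :
    Matrix (Fin N × Fin N) (Fin N × Fin N) ℂ :=
  Matrix.of fun p r => X (r.1, p.2) (p.1, r.2)

/-- The charge conjugation matrix `C = Σ_i (-q)^i E_{ī i}` where `ī = N+1-i`. -/
def Cmat (N : ℕ) (q : ℂ) : Matrix (Fin N) (Fin N) ℂ :=
  ∑ i ∈ Finset.Icc 1 N, (-q) ^ i • Em N (N + 1 - i) i

/-- The C-conjugated R-matrix `R^∨(u) = C2⁻¹ R^{t1}(q̃² u⁻¹) C2` with `q̃ = s^N`. -/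
def Rvee (N : ℕ) (q s u : ℂ) : Matrix (Fin N × Fin N) (Fin N × Fin N) ℂ :=
  (M2 N (Cmat N q))⁻¹ * t1 N (RBJ N q ((s ^ N) ^ 2 * u⁻¹)) * M2 N (Cmat N q)

/-- `R^∨21(u) = P R^∨(u) P`. -/
def Rvee21 (N : ℕ) (q s u : ℂ) : Matrix (Fin N × Fin N) (Fin N × Fin N) ℂ :=
  Pmat N * Rvee N q s u * Pmat N

/-- The untwisted reflection equation at spectral parameters `(u, v)`. -/
def REeq (N : ℕ) (q : ℂ) (K : ℂ → Matrix (Fin N) (Fin N) ℂ) (u v : ℂ) : Prop :=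
  R21 N q (u / v) * M1 N (K u) * RBJ N q (u * v) * M2 N (K v)
    = M2 N (K v) * R21 N q (u * v) * M1 N (K u) * RBJ N q (u / v)

/-- `K` satisfies the untwisted reflection equation (RE) for all `u, v`
for which all factors are defined. -/
def IsRESol (N : ℕ) (q : ℂ) (K : ℂ → Matrix (Fin N) (Fin N) ℂ) : Prop :=
  ∀ u v : ℂ, u ≠ 0 → v ≠ 0 → u / v ≠ q ^ 2 → u / v ≠ q⁻¹ ^ 2 →
    u * v ≠ q ^ 2 → u * v ≠ q⁻¹ ^ 2 → REeq N q K u v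

/-- The cross-conjugated twisted reflection equation at `(u, v)`. -/
def CtREeq (N : ℕ) (q s : ℂ) (K : ℂ → Matrix (Fin N) (Fin N) ℂ) (u v : ℂ) : Prop :=
  R21 N q (u / v) * M1 N (K u) * Rvee N q s (u * v) * M2 N (K v)
    = M2 N (K v) * Rvee21 N q s (u * v) * M1 N (K u) * RBJ N q (u / v)

/-- `K` satisfies the cross-conjugated twisted reflection equation (CtRE) for all
`u, v` for which all factors are defined. -/
def IsCtRESol (N : ℕ) (q s : ℂ) (K : ℂ → Matrix (Fin N) (Fin N) ℂ) : Prop :=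
  ∀ u v : ℂ, u ≠ 0 → v ≠ 0 → u / v ≠ q ^ 2 → u / v ≠ q⁻¹ ^ 2 →
    (s ^ N) ^ 2 * (u * v)⁻¹ ≠ q ^ 2 → (s ^ N) ^ 2 * (u * v)⁻¹ ≠ q⁻¹ ^ 2 →
    CtREeq N q s K u v

/-- Transposition across the antidiagonal: `(M^w)_{ij} = M_{N+1-j, N+1-i}`. -/
def wT (N : ℕ) (M : Matrix (Fin N) (Fin N) ℂ) : Matrix (Fin N) (Fin N) ℂ :=
  Matrix.of fun i j => M (Fin.rev j) (Fin.rev i)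

/-!
Since `f_{q⁻¹}(u⁻¹) = -u f_q(u)`, the R-matrix is `f_q(u)` times a polynomial matrix of the form
`(1 - u) • 1 + Σ e_{ij}(u) E_{ij} ⊗ E_{ji}`, the sum running over all `i, j`, diagonal pairs
included (`RBJ_eq`). Likewise `R^∨` is a scalar multiple of
`(1 - y) • 1 + Σ e_{ki}(y) (-q)^{i-k} E_{ik} ⊗ E_{ī k̄}` with `y = q̃² / (uv)` (`Rvee_eq`). The
scalars occur once on each side of the reflection equation and cancel, so only the polynomial
matrices matter.

Write `N = 2h`. The matrix `K(u)` is monomial: it is attached to the involution `σ = blockRev`,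
which reverses each half of the index set, with weights `κ_i(u) = u` on the first half and `1` on
the second (`K_eq`). The composite of `σ` with `i ↦ ī` is the shift `τ = halfShift` by `± h`. Both
sides of the equation therefore have explicit entries, and multiplying out `(1 - u/v) • 1` and the
exchange part of `R(u/v)` reduces the claim to three scalar identities:

* `exC_blockRev`: `K₁(u) K₂(v)` intertwines `R(u/v)` and `R₂₁(u/v)`;
* `exC_shift_shift`: the rank-one-type part of `R^∨` is compatible with the shift `τ`; this is the
  place where the value `q̃² = (-q)^{2h}` is needed;
* `exC_halfShift`: the exchange coefficients on the pairs `(j, τ j)` depend on `j` exactly as the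
  ratio of the weights does.

`core` assembles them.
-/

/-! ### Explicit entries of `R` and `R^∨` -/

/-- Coefficient `e_{ij}(x)` of `E_{ij} ⊗ E_{ji}` in `f_q(x)⁻¹ R(x) - (1 - x) • 1`. The diagonal case
`i = j` is the difference between the diagonal entry `q - q⁻¹ x` and `1 - x`. -/
def exC {N : ℕ} (q x : ℂ) (i j : Fin N) : ℂ :=
  if i = j then q - 1 - x * (q⁻¹ - 1) else if i < j then q - q⁻¹ else x * (q - q⁻¹)

/-- The polynomial R-matrix `f_q(x)⁻¹ R(x)`. -/
def Rm (N : ℕ) (q x : ℂ) : Matrix (Fin N × Fin N) (Fin N × Fin N) ℂ :=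
  Matrix.of fun p r => (if p = r then 1 - x else 0) + if p.swap = r then exC q x p.1 p.2 else 0

/-- The polynomial form of `R^∨`, as a function of the argument `y` at which `R^{t1}` is
evaluated. -/
def Vm (N : ℕ) (q y : ℂ) : Matrix (Fin N × Fin N) (Fin N × Fin N) ℂ :=
  Matrix.of fun p r => (if p = r then 1 - y else 0) +
    if p.2 = p.1.rev ∧ r.2 = r.1.rev then
      exC q y r.1 p.1 * ((-q) ^ (p.1 : ℕ) * ((-q) ^ (r.1 : ℕ))⁻¹) else 0

/-- The involution `σ` reversing each of the two halves of the (0-based) index set. -/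
def blockRev {h : ℕ} (i : Fin (h + h)) : Fin (h + h) :=
  ⟨if (i : ℕ) < h then h - 1 - i else h + h + h - 1 - i, by split_ifs <;> omega⟩

/-- The weight `κ_i(u)`: the nonzero entry of `K(u)` in row `i`. -/
def blockWt {h : ℕ} (u : ℂ) (i : Fin (h + h)) : ℂ := if (i : ℕ) < h then u else 1

/-- The monomial matrix with nonzero entries `κ_i(u)` at `(i, σ i)`. -/
def Km (h : ℕ) (u : ℂ) : Matrix (Fin (h + h)) (Fin (h + h)) ℂ :=
  Matrix.of fun i j => if j = blockRev i then blockWt u i else 0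

lemma sum_Icc_one {M : Type*} [AddCommMonoid M] (N : ℕ) (f : ℕ → M) :
    ∑ i ∈ Finset.Icc 1 N, f i = ∑ i : Fin N, f (i + 1) := by
  rw [Fin.sum_univ_eq_sum_range (fun i => f (i + 1)) N, Finset.range_eq_Ico,
    Finset.sum_Ico_add' f 0 N 1]
  rfl

lemma Em_succ (N : ℕ) (i j : Fin N) : Em N (i + 1) (j + 1) = Matrix.single i j 1 := by
  ext a b
  simp only [Em, Matrix.of_apply, Matrix.single_apply, add_left_inj, Fin.val_inj]
  simp only [eq_comm]

lemma Pmat_apply (N : ℕ) (p r : Fin N × Fin N) :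
    Pmat N p r = if p.swap = r then 1 else 0 := by
  obtain ⟨i, j⟩ := p
  obtain ⟨k, l⟩ := r
  simp only [Pmat, sum_Icc_one, Em_succ, Matrix.sum_apply, Matrix.kroneckerMap_apply,
    Matrix.single_apply, Prod.swap_prod_mk, Prod.mk.injEq]
  rw [Finset.sum_eq_single i (by intro b _ hb; simp [hb]) (by simp),
    Finset.sum_eq_single j (by intro b _ hb; simp [hb]) (by simp)]
  simp [← ite_and, and_comm]

lemma Pmat_conj (N : ℕ) (X : Matrix (Fin N × Fin N) (Fin N × Fin N) ℂ) (p r : Fin N × Fin N) :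
    (Pmat N * X * Pmat N) p r = X p.swap r.swap := by
  have h (x : Fin N × Fin N) : x.swap = r ↔ x = r.swap := by
    constructor <;> (rintro rfl; simp)
  simp [Matrix.mul_apply, Pmat_apply, h]

lemma Rconst_apply (N : ℕ) (q : ℂ) (i j k l : Fin N) :
    Rconst N q (i, j) (k, l) =
      (if i = k ∧ j = l then (if i = j then q else 1) else 0) +
        if i = l ∧ j = k then (if i < j then q - q⁻¹ else 0) else 0 := by
  simp only [Rconst, sum_Icc_one, Em_succ, Matrix.add_apply, Matrix.sum_apply, Matrix.smul_apply,
    Matrix.kroneckerMap_apply, Matrix.single_apply]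
  congr 1
  · rw [Finset.sum_eq_single i (by intro b _ hb; simp [hb]) (by simp),
      Finset.sum_eq_single j (by intro b _ hb; simp [hb]) (by simp)]
    simp [← ite_and, and_comm, Fin.val_inj]
  · rw [Finset.sum_eq_single i (by intro b _ hb; simp [hb]) (by simp),
      Finset.sum_eq_single j (by intro b _ hb; simp [hb]) (by simp)]
    simp [← ite_and, and_assoc]

lemma RBJ_eq (N : ℕ) (q x : ℂ) (hq : q ≠ 0) (hx : x ≠ 0) :
    RBJ N q x = fBJ q x • Rm N q x := by
  -- The identity also holds at the pole of `f_q`, where both sides are `0`.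
  have hf : fBJ q⁻¹ x⁻¹ = -x * fBJ q x := by
    have : q⁻¹ - (q⁻¹)⁻¹ * x⁻¹ = -(x⁻¹ * (q - q⁻¹ * x)) := by field_simp; ring
    rw [fBJ, this, inv_neg, mul_inv, inv_inv, fBJ, neg_mul]
  ext ⟨i, j⟩ ⟨k, l⟩
  simp only [RBJ, hf, Matrix.add_apply, Matrix.smul_apply, Pmat_conj, Prod.swap_prod_mk,
    Rconst_apply, Rm, Matrix.of_apply, Prod.mk.injEq, smul_eq_mul, exC, inv_inv]
  rcases lt_trichotomy i j with hij | rfl | hij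
  · have h1 := hij.ne
    have h2 := hij.ne'
    have h3 := hij.not_gt
    simp only [hij, h1, h2, h3, if_true, if_false, and_comm]
    split_ifs <;> simp_all <;> ring
  · simp only [lt_irrefl, if_true, if_false, and_comm]
    split_ifs <;> simp_all <;> ring
  · have h1 := hij.ne
    have h2 := hij.ne'
    have h3 := hij.not_gt
    simp only [hij, h1, h2, h3, if_true, if_false, and_comm]
    split_ifs <;> simp_all <;> ring

lemma Cmat_apply (N : ℕ) (q : ℂ) (a b : Fin N) :
    Cmat N q a b = if a = b.rev then (-q) ^ ((b : ℕ) + 1) else 0 := by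
  have h (i : Fin N) : N + 1 - ((i : ℕ) + 1) = (i.rev : ℕ) + 1 := by
    rw [Fin.val_rev]; omega
  simp only [Cmat, sum_Icc_one, h, Em_succ, Matrix.sum_apply, Matrix.smul_apply,
    Matrix.single_apply, smul_eq_mul]
  rw [Finset.sum_eq_single b (by intro c _ hb; simp [hb]) (by simp)]
  simp [eq_comm]

lemma Cmat_inv (N : ℕ) (q : ℂ) (hq : q ≠ 0) :
    (M2 N (Cmat N q))⁻¹ =
      M2 N (Matrix.of fun a b => if b = a.rev then ((-q) ^ ((a : ℕ) + 1))⁻¹ else 0) := by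
  apply Matrix.inv_eq_right_inv
  rw [M2, M2, ← Matrix.mul_kronecker_mul, one_mul, ← Matrix.one_kronecker_one]
  congr 1
  ext a b
  rw [Matrix.mul_apply, Finset.sum_eq_single a.rev]
  · have hp := mul_inv_cancel₀ (pow_ne_zero ((a.rev : ℕ) + 1) (neg_ne_zero.mpr hq))
    simp only [Cmat_apply, Matrix.one_apply, Matrix.of_apply, Fin.rev_rev, if_true, mul_ite,
      mul_zero, hp, eq_comm]
  · intro c _ hc
    rw [Cmat_apply, if_neg, zero_mul]
    rintro rfl
    simp at hc
  · simp

lemma Rvee_eq (N : ℕ) (q s w : ℂ) (hq : q ≠ 0) (hy : (s ^ N) ^ 2 * w⁻¹ ≠ 0) :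
    Rvee N q s w = fBJ q ((s ^ N) ^ 2 * w⁻¹) • Vm N q ((s ^ N) ^ 2 * w⁻¹) := by
  rw [Rvee, Cmat_inv N q hq, RBJ_eq N q _ hq hy]
  generalize (s ^ N) ^ 2 * w⁻¹ = y
  ext ⟨i, j⟩ ⟨k, l⟩
  have hL (X : Matrix (Fin N × Fin N) (Fin N × Fin N) ℂ) (p : Fin N × Fin N) :
      (M2 N (Matrix.of fun a b => if b = a.rev then ((-q) ^ ((a : ℕ) + 1))⁻¹ else 0) * X) (i, j) p
        = ((-q) ^ ((j : ℕ) + 1))⁻¹ * X (i, j.rev) p := by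
    simp [Matrix.mul_apply, M2, Fintype.sum_prod_type, Matrix.one_apply]
  have hR (X : Matrix (Fin N × Fin N) (Fin N × Fin N) ℂ) (p : Fin N × Fin N) :
      (X * M2 N (Cmat N q)) p (k, l) = X p (k, l.rev) * (-q) ^ ((l : ℕ) + 1) := by
    simp [Matrix.mul_apply, M2, Fintype.sum_prod_type, Matrix.one_apply, Cmat_apply]
  rw [hR, hL]
  have hq' : -q ≠ 0 := neg_ne_zero.mpr hq
  simp only [t1, Rm, Vm, Matrix.of_apply, Matrix.smul_apply, smul_eq_mul, Prod.swap_prod_mk,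
    Prod.mk.injEq, Fin.rev_inj]
  have e1 : (j = i.rev ∧ l = k.rev) ↔ (j.rev = i ∧ k = l.rev) := by
    constructor <;> (rintro ⟨rfl, rfl⟩; simp)
  simp only [e1]
  by_cases c1 : k = i ∧ j = l
  · obtain ⟨rfl, rfl⟩ := c1
    by_cases c2 : j.rev = k
    · subst c2
      simp
      field_simp
    · simp [c2]
      field_simp
  · have c1' : ¬ (i = k ∧ j = l) := by tauto
    by_cases c2 : j.rev = i ∧ k = l.rev
    · obtain ⟨rfl, rfl⟩ := c2
      -- `(-q)^{l - j} = (-q)^{j̄ - l̄}`, because `j + j̄ = l + l̄`.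
      have e : (-q) ^ ((j : ℕ) + 1) * (-q) ^ (j.rev : ℕ)
          = (-q) ^ ((l : ℕ) + 1) * (-q) ^ (l.rev : ℕ) := by
        rw [← pow_add, ← pow_add, Fin.val_rev, Fin.val_rev]
        congr 1
        omega
      simp only [c1, c1', if_false, and_self, if_true, zero_add]
      field_simp
      linear_combination (-fBJ q y * exC q y l.rev j.rev) * e
    · have c2' : ¬ (j.rev = i ∧ k = l.rev) := c2
      simp [c1, c1', c2']

/-! ### The K-matrix and the scalar identities -/

lemma K_eq (h : ℕ) (u : ℂ) :
    (∑ i ∈ Finset.Icc 1 ((h + h) / 2),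
      (u • Em (h + h) i ((h + h) / 2 - i + 1) +
        Em (h + h) (i + (h + h) / 2) ((h + h) - i + 1))) = Km h u := by
  have hh : (h + h) / 2 = h := by omega
  rw [hh]
  ext a b
  have ha := a.isLt
  have hb := b.isLt
  simp only [Matrix.sum_apply, Matrix.add_apply, Matrix.smul_apply, Em, Matrix.of_apply, Km,
    blockRev, blockWt, Fin.ext_iff, smul_eq_mul]
  by_cases hlt : (a : ℕ) < h
  · rw [Finset.sum_eq_single ((a : ℕ) + 1)]
    · have e1 : ¬ ((a : ℕ) + 1 = a + 1 + h ∧ (b : ℕ) + 1 = h + h - (a + 1) + 1) := by omega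
      have e2 : (True ∧ (b : ℕ) + 1 = h - (a + 1) + 1) ↔ (b : ℕ) = h - 1 - a := by
        rw [true_and]
        omega
      simp only [hlt, e1, if_true, if_false]
      simp only [e2]
      split_ifs <;> simp
    · intro c hc hca
      rw [Finset.mem_Icc] at hc
      rw [if_neg (by omega), if_neg (by omega)]
      simp
    · intro hn
      exact absurd (Finset.mem_Icc.mpr ⟨by omega, by omega⟩) hn
  · rw [Finset.sum_eq_single ((a : ℕ) + 1 - h)]
    · have e1 : ¬ ((a : ℕ) + 1 = a + 1 - h ∧ (b : ℕ) + 1 = h - (a + 1 - h) + 1) := by omega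
      have e2 : ((a : ℕ) + 1 = a + 1 - h + h ∧ (b : ℕ) + 1 = h + h - (a + 1 - h) + 1) ↔
          (b : ℕ) = h + h + h - 1 - a := by
        omega
      simp only [hlt, e1, e2, if_false]
      split_ifs <;> simp
    · intro c hc hca
      rw [Finset.mem_Icc] at hc
      rw [if_neg (by omega), if_neg (by omega)]
      simp
    · intro hn
      exact absurd (Finset.mem_Icc.mpr ⟨by omega, by omega⟩) hn

lemma blockRev_blockRev {h : ℕ} (i : Fin (h + h)) : blockRev (blockRev i) = i := by
  apply Fin.ext
  simp only [blockRev]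
  split_ifs <;> omega

lemma eq_blockRev_iff {h : ℕ} (i j : Fin (h + h)) : i = blockRev j ↔ j = blockRev i := by
  constructor <;> (rintro rfl; simp [blockRev_blockRev])

lemma blockWt_blockRev {h : ℕ} (u : ℂ) (i : Fin (h + h)) :
    blockWt u (blockRev i) = blockWt u i := by
  have : ((blockRev i : Fin (h + h)) : ℕ) < h ↔ (i : ℕ) < h := by
    simp only [blockRev]; split_ifs <;> omega
  simp only [blockWt, this]

/-- The shift `τ`: it sends `i` to `i + h` on the first half and to `i - h` on the second. -/
def halfShift {h : ℕ} (i : Fin (h + h)) : Fin (h + h) := (blockRev i).rev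

/-- The entrywise form of `R₂₁(u/v) K₁(u) K₂(v) = K₁(u) K₂(v) R(u/v)`. Within one half, `σ` reverses
the order, so the coefficients agree; across the halves, the order is kept and the factor `u/v`
between the two coefficients matches the weights. -/
lemma exC_blockRev {h : ℕ} (q u v : ℂ) (hv : v ≠ 0) (i j : Fin (h + h)) :
    exC q (u / v) j i * blockWt u j * blockWt v i =
      exC q (u / v) (blockRev i) (blockRev j) * blockWt v j * blockWt u i := by
  rcases eq_or_ne i j with rfl | hij
  · simp only [exC, if_true]; ring
  have hij' : (i : ℕ) ≠ j := Fin.val_ne_of_ne hij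
  simp only [exC, blockRev, blockWt, Fin.ext_iff, Fin.lt_def]
  split_ifs <;> first | omega | (field_simp)

/-- If `j` and `l` lie in the same half, both sides agree factor by factor; otherwise the two exchange
coefficients differ by the factor `u/v`, which matches the weights. -/
lemma exC_halfShift {h : ℕ} (q u v : ℂ) (hv : v ≠ 0) (j l : Fin (h + h)) :
    exC q (u / v) j (halfShift j) * blockWt u j * blockWt v l =
      exC q (u / v) l (halfShift l) * blockWt v j * blockWt u l := by
  simp only [exC, halfShift, blockRev, blockWt, Fin.ext_iff, Fin.lt_def, Fin.val_rev]
  split_ifs <;> first | omega | (field_simp)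

/-- Compatibility of the non-scalar part of `R^∨` with `τ`. If `k` and `m` lie in different halves, `τ`
reverses their order, which costs a factor `y`, and moves the exponent `m - k` by `2h`; the two
effects cancel precisely because `u v y = (-q)^{2h}`. -/
lemma exC_shift_shift {h : ℕ} (q u v y : ℂ) (hq : q ≠ 0) (hu : u ≠ 0) (hv : v ≠ 0)
    (hy : y = (-q) ^ (h + h) * (u * v)⁻¹) (k m : Fin (h + h)) :
    blockWt u m * blockWt v (halfShift k) *
        (exC q y k m * ((-q) ^ (m : ℕ) * ((-q) ^ (k : ℕ))⁻¹)) =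
      blockWt v (halfShift m) * blockWt u k *
        (exC q y (halfShift k) (halfShift m) *
          ((-q) ^ (halfShift m : ℕ) * ((-q) ^ (halfShift k : ℕ))⁻¹)) := by
  have hq' : -q ≠ 0 := neg_ne_zero.mpr hq
  have hs (i : Fin (h + h)) : (halfShift i : ℕ) = if (i : ℕ) < h then i + h else i - h := by
    simp only [halfShift, blockRev, Fin.val_rev]; split_ifs <;> omega
  rw [pow_add] at hy
  simp only [exC, blockWt, Fin.ext_iff, Fin.lt_def, hs]
  generalize (-q) = g at *
  obtain ⟨k, hk⟩ := k
  obtain ⟨m, hm⟩ := m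
  simp only
  by_cases hkh : k < h
  · by_cases hmh : m < h
    · split_ifs <;> first | omega | (simp only [pow_add]; field_simp)
    · obtain ⟨m, rfl⟩ := Nat.exists_eq_add_of_le (not_lt.mp hmh)
      subst hy
      split_ifs <;> first | omega | (simp only [pow_add, Nat.add_sub_cancel_left]; field_simp)
  · obtain ⟨k, rfl⟩ := Nat.exists_eq_add_of_le (not_lt.mp hkh)
    by_cases hmh : m < h
    · subst hy
      split_ifs <;> first | omega | (simp only [pow_add, Nat.add_sub_cancel_left]; field_simp)
    · obtain ⟨m, rfl⟩ := Nat.exists_eq_add_of_le (not_lt.mp hmh)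
      split_ifs <;> first | omega | (simp only [pow_add, Nat.add_sub_cancel_left]; field_simp)

/-! ### Entries of the products -/

lemma R21m_mul (N : ℕ) (q x : ℂ) (X : Matrix (Fin N × Fin N) (Fin N × Fin N) ℂ) (i j : Fin N)
    (r : Fin N × Fin N) :
    ((Pmat N * Rm N q x * Pmat N) * X) (i, j) r
      = (1 - x) * X (i, j) r + exC q x j i * X (j, i) r := by
  have e (p : Fin N × Fin N) : (Pmat N * Rm N q x * Pmat N) (i, j) p =
      (if (i, j) = p then 1 - x else 0) + if (j, i) = p then exC q x j i else 0 := by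
    obtain ⟨k, l⟩ := p
    rw [Pmat_conj]
    simp [Rm, and_comm]
  simp [Matrix.mul_apply, e, add_mul, Finset.sum_add_distrib]

lemma mul_Rm (N : ℕ) (q x : ℂ) (X : Matrix (Fin N × Fin N) (Fin N × Fin N) ℂ) (k l : Fin N)
    (p : Fin N × Fin N) :
    (X * Rm N q x) p (k, l) = (1 - x) * X p (k, l) + exC q x l k * X p (l, k) := by
  have e (r : Fin N × Fin N) : Rm N q x r (k, l) =
      (if r = (k, l) then 1 - x else 0) + if r = (l, k) then exC q x l k else 0 := by
    obtain ⟨a, b⟩ := r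
    simp only [Rm, Matrix.of_apply, Prod.swap_prod_mk, Prod.mk.injEq]
    congr 1
    by_cases h : a = l ∧ b = k
    · obtain ⟨rfl, rfl⟩ := h; simp
    · rw [if_neg h, if_neg (by tauto)]
  simp [Matrix.mul_apply, e, mul_add, Finset.sum_add_distrib, mul_comm]

lemma M1_Km_mul (h : ℕ) (u : ℂ)
    (X : Matrix (Fin (h + h) × Fin (h + h)) (Fin (h + h) × Fin (h + h)) ℂ)
    (i j : Fin (h + h)) (r : Fin (h + h) × Fin (h + h)) :
    (M1 (h + h) (Km h u) * X) (i, j) r = blockWt u i * X (blockRev i, j) r := by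
  simp [Matrix.mul_apply, M1, Km, Fintype.sum_prod_type, Matrix.one_apply]

lemma M2_Km_mul (h : ℕ) (u : ℂ)
    (X : Matrix (Fin (h + h) × Fin (h + h)) (Fin (h + h) × Fin (h + h)) ℂ)
    (i j : Fin (h + h)) (r : Fin (h + h) × Fin (h + h)) :
    (M2 (h + h) (Km h u) * X) (i, j) r = blockWt u j * X (i, blockRev j) r := by
  simp [Matrix.mul_apply, M2, Km, Fintype.sum_prod_type, Matrix.one_apply]

lemma mul_M1_Km (h : ℕ) (u : ℂ)
    (X : Matrix (Fin (h + h) × Fin (h + h)) (Fin (h + h) × Fin (h + h)) ℂ)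
    (k l : Fin (h + h)) (p : Fin (h + h) × Fin (h + h)) :
    (X * M1 (h + h) (Km h u)) p (k, l) = X p (blockRev k, l) * blockWt u k := by
  have e (a : Fin (h + h)) : Km h u a k = if a = blockRev k then blockWt u k else 0 := by
    simp only [Km, Matrix.of_apply, eq_blockRev_iff k a]
    split_ifs with hh
    · rw [hh, blockWt_blockRev]
    · rfl
  simp [Matrix.mul_apply, M1, e, Fintype.sum_prod_type, Matrix.one_apply]

lemma mul_M2_Km (h : ℕ) (u : ℂ)
    (X : Matrix (Fin (h + h) × Fin (h + h)) (Fin (h + h) × Fin (h + h)) ℂ)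
    (k l : Fin (h + h)) (p : Fin (h + h) × Fin (h + h)) :
    (X * M2 (h + h) (Km h u)) p (k, l) = X p (k, blockRev l) * blockWt u l := by
  have e (a : Fin (h + h)) : Km h u a l = if a = blockRev l then blockWt u l else 0 := by
    simp only [Km, Matrix.of_apply, eq_blockRev_iff l a]
    split_ifs with hh
    · rw [hh, blockWt_blockRev]
    · rfl
  simp [Matrix.mul_apply, M2, e, Fintype.sum_prod_type, Matrix.one_apply]

lemma halfShift_halfShift {h : ℕ} (i : Fin (h + h)) : halfShift (halfShift i) = i := by
  apply Fin.ext
  simp only [halfShift, blockRev, Fin.val_rev]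
  split_ifs <;> omega

lemma halfShift_blockRev {h : ℕ} (i : Fin (h + h)) :
    halfShift (blockRev i) = blockRev (halfShift i) := by
  apply Fin.ext
  simp only [halfShift, blockRev, Fin.val_rev]
  split_ifs <;> omega

lemma blockRev_eq_rev_iff {h : ℕ} (l k : Fin (h + h)) : blockRev l = k.rev ↔ k = halfShift l := by
  rw [halfShift]
  constructor
  · intro e; rw [e, Fin.rev_rev]
  · rintro rfl; rw [Fin.rev_rev]

/-! ### The reflection equation -/

/-- The reflection equation for the polynomial forms of `R` and `R^∨`. -/
lemma core (h : ℕ) (q u v y : ℂ) (hq : q ≠ 0) (hu : u ≠ 0) (hv : v ≠ 0)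
    (hy : y = (-q) ^ (h + h) * (u * v)⁻¹) :
    (Pmat (h + h) * Rm (h + h) q (u / v) * Pmat (h + h)) * (M1 (h + h) (Km h u) *
        (Vm (h + h) q y * M2 (h + h) (Km h v))) =
      (M2 (h + h) (Km h v) * ((Pmat (h + h) * Vm (h + h) q y * Pmat (h + h)) *
        M1 (h + h) (Km h u))) * Rm (h + h) q (u / v) := by
  ext ⟨i, j⟩ ⟨k, l⟩
  simp only [R21m_mul, mul_Rm, M1_Km_mul, M2_Km_mul, mul_M1_Km, mul_M2_Km, Pmat_conj,
    Prod.swap_prod_mk]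
  have hV (a b c d : Fin (h + h)) : Vm (h + h) q y (blockRev a, b) (c, blockRev d) =
      (if c = blockRev a ∧ b = blockRev d then 1 - y else 0) +
        if b = halfShift a ∧ c = halfShift d then
          exC q y c (blockRev a) * ((-q) ^ (blockRev a : ℕ) * ((-q) ^ (c : ℕ))⁻¹) else 0 := by
    simp only [Vm, Matrix.of_apply, Prod.mk.injEq, blockRev_eq_rev_iff, halfShift]
    congr 1
    simp only [eq_comm]
  -- The contribution of `(1 - u/v) • 1` from `R(u/v)`.
  have h1 : blockWt u i * blockWt v l * Vm (h + h) q y (blockRev i, j) (k, blockRev l) =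
      blockWt v j * blockWt u k * Vm (h + h) q y (blockRev j, i) (l, blockRev k) := by
    rw [hV, hV, mul_add, mul_add]
    congr 1
    · by_cases c1 : k = blockRev i ∧ j = blockRev l
      · obtain ⟨rfl, rfl⟩ := c1
        simp only [blockRev_blockRev, blockWt_blockRev, and_self, if_true]
        ring
      · have c2 : ¬ (l = blockRev j ∧ i = blockRev k) := by
          rwa [eq_blockRev_iff l j, eq_blockRev_iff i k, and_comm]
        rw [if_neg c1, if_neg c2, mul_zero, mul_zero]
    · by_cases c1 : j = halfShift i ∧ k = halfShift l
      · obtain ⟨rfl, rfl⟩ := c1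
        have := exC_shift_shift q u v y hq hu hv hy (halfShift l) (blockRev i)
        simp only [halfShift_halfShift, halfShift_blockRev, blockWt_blockRev] at this ⊢
        simpa using this
      · have c2 : ¬ (i = halfShift j ∧ l = halfShift k) := by
          rintro ⟨rfl, rfl⟩
          simp [halfShift_halfShift] at c1
        rw [if_neg c1, if_neg c2, mul_zero, mul_zero]
  -- The contribution of the exchange part of `R(u/v)`.
  have h2 : exC q (u / v) j i * blockWt u j * blockWt v l *
        Vm (h + h) q y (blockRev j, i) (k, blockRev l) =
      exC q (u / v) l k * blockWt v j * blockWt u l *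
        Vm (h + h) q y (blockRev j, i) (k, blockRev l) := by
    rw [hV]
    by_cases c1 : k = blockRev j ∧ i = blockRev l
    · obtain ⟨rfl, rfl⟩ := c1
      have := exC_blockRev q u v hv (blockRev l) j
      simp only [blockRev_blockRev, blockWt_blockRev] at this
      rw [this]
    · by_cases c2 : i = halfShift j ∧ k = halfShift l
      · obtain ⟨rfl, rfl⟩ := c2
        rw [exC_halfShift q u v hv j l]
      · rw [if_neg c1, if_neg c2, add_zero, mul_zero, mul_zero]
  linear_combination (1 - u / v) * h1 + h2

/-- for even `N`, the matrix-valued function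
`K(u) = Σ_{1≤i≤N/2} ( u E_{i, N/2-i+1} + E_{i+N/2, N-i+1} )` satisfies the
cross-conjugated twisted reflection equation (CtRE). -/
theorem statement18 (N : ℕ) (hN : 2 ≤ N) (hNe : Even N)
    (q s : ℂ) (hq : q ≠ 0) (hs : s ^ 2 = -q) :
    IsCtRESol N q s
      (fun u => ∑ i ∈ Finset.Icc 1 (N / 2),
        (u • Em N i (N / 2 - i + 1) + Em N (i + N / 2) (N - i + 1))) := by
  obtain ⟨h, rfl⟩ := hNe
  intro u v hu hv _ _ _ _
  have hs0 : s ≠ 0 := by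
    rintro rfl
    exact hq (by simpa using hs.symm)
  have hy : (s ^ (h + h)) ^ 2 * (u * v)⁻¹ ≠ 0 :=
    mul_ne_zero (pow_ne_zero _ (pow_ne_zero _ hs0)) (inv_ne_zero (mul_ne_zero hu hv))
  have hsp : (s ^ (h + h)) ^ 2 = (-q) ^ (h + h) := by
    rw [← pow_mul, mul_comm, pow_mul, hs]
  have key := core h q u v _ hq hu hv rfl
  rw [← hsp] at key
  simp only [CtREeq, K_eq, R21, Rvee21, Rvee_eq (h + h) q s (u * v) hq hy,
    RBJ_eq (h + h) q (u / v) hq (div_ne_zero hu hv)]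
  simp only [Matrix.mul_smul, Matrix.smul_mul, Matrix.mul_assoc] at key ⊢
  rw [key, smul_comm]

end
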